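/- Theorem (sample efficiency of representation-based behavioral cloning): Let π* be a policy in a finite MDP and d^off a probability distribution on S with d^off(s) > 0 whenever d^{π*}(s) > 0. Let Z be a finite set, φ : S → Z, R_Z : Z×A → [−R_max, R_max], and P_Z a function where P_Z(·|z,a) is a probability distribution on S for every (z,a) with P_Z(s'|φ(s),a) > 0 whenever P(s'|s,a) > 0 and d^off(s) > 0, and let ε = (|A|/(1−γ)) J_R + (2γ|A| R_max/(1−γ)²) J_T with J_R = √(∑_s d^off(s)(1/|A|)∑_a (R(s,a)−R_Z(φ(s),a))²) and J_T = √((1/2)∑_s d^off(s)(1/|A|)∑_a D_KL(P(·|s,a)‖P_Z(·|φ(s),a))). Let (s_1,a_1),…,(s_N,a_N) be i.i.d. with s_j ∼ d^{π*} and a_j ∼ π*(·|s_j), and let π_{N,Z} be the tabular behavioral-cloning policy on Z: π_{N,Z}(a|z) = #{j : (φ(s_j),a_j)=(z,a)} / #{j : φ(s_j)=z} for z with #{j : φ(s_j)=z} > 0, and π_{N,Z}(·|z) an arbitrary fixed probability distribution on A otherwise. Then E[ PerfDiff(π_{N,Z}∘φ, π*) ] ≤ (1 + D_χ²(d^{π*}‖d^off)^{1/2})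 · ε + (2R_max/(1−γ)²) · √( |Z||A| / N ), where the expectation is over the i.i.d. demonstration sample and π_{N,Z}∘φ is the policy s ↦ π_{N,Z}(·|φ(s)). -/

import Mathlib

open Finset

noncomputable section

variable {S A Z : Type*}

/-- State distribution at time `t` when following policy `π` from initial distribution `μ`. -/
def stateDist [Fintype S] [Fintype A] (P : S → A → S → ℝ) (π : S → A → ℝ)
    (μ : S → ℝ) : ℕ → S → ℝ
  | 0 => μ
  | t + 1 => fun s' => ∑ s : S, ∑ a : A, π s a * P s a s' * stateDist P π μ t s

/-- Discounted visitation distribution `d^π`. -/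
def visitation [Fintype S] [Fintype A] (P : S → A → S → ℝ) (π : S → A → ℝ)
    (μ : S → ℝ) (γ : ℝ) (s : S) : ℝ :=
  (1 - γ) * ∑' t : ℕ, γ ^ t * stateDist P π μ t s

/-- Performance `J(π)`. -/
def perf [Fintype S] [Fintype A] (P : S → A → S → ℝ) (R : S → A → ℝ)
    (π : S → A → ℝ) (μ : S → ℝ) (γ : ℝ) : ℝ :=
  ∑' t : ℕ, γ ^ t * ∑ s : S, ∑ a : A, R s a * π s a * stateDist P π μ t s

/-- `PerfDiff(π, π')`. -/
def perfDiff [Fintype S] [Fintype A] (P : S → A → S → ℝ) (R : S → A → ℝ)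
    (μ : S → ℝ) (γ : ℝ) (π π' : S → A → ℝ) : ℝ :=
  |perf P R π μ γ - perf P R π' μ γ|

/-- Total variation distance. -/
def dTV {X : Type*} [Fintype X] (p q : X → ℝ) : ℝ :=
  (1 / 2) * ∑ x : X, |p x - q x|

/-- KL divergence. -/
def dKL {X : Type*} [Fintype X] (p q : X → ℝ) : ℝ :=
  ∑ x : X, p x * Real.log (p x / q x)

/-- Pearson chi-squared divergence (terms with `q x = 0` vanish by the `x / 0 = 0` convention). -/
def dChi2 {X : Type*} [Fintype X] (p q : X → ℝ) : ℝ :=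
  ∑ x : X, (p x - q x) ^ 2 / q x

/-- `Err_ρ(π1, π2, F)` for a reward-like function `F`. -/
def errF [Fintype S] [Fintype A] (ρ : S → ℝ) (π1 π2 : S → A → ℝ) (F : S → A → ℝ) : ℝ :=
  |∑ s : S, ρ s * ∑ a : A, (π1 s a - π2 s a) * F s a|

/-- `Err_ρ(π1, π2, G)` for a transition-like function `G`. -/
def errG [Fintype S] [Fintype A] (ρ : S → ℝ) (π1 π2 : S → A → ℝ) (G : S → A → S → ℝ) : ℝ :=
  ∑ s' : S, |∑ s : S, ρ s * ∑ a : A, (π1 s a - π2 s a) * G s a s'|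

/-- Marginalization `ρ_Z` of a state distribution onto `Z` via `φ`. -/
def margDist [Fintype S] [DecidableEq Z] (φ : S → Z) (ρ : S → ℝ) (z : Z) : ℝ :=
  ∑ s : S, if φ s = z then ρ s else 0

/-- Marginalization `π_Z` of a policy onto `Z` via `φ`, w.r.t. the state distribution `ρ`
(by the `x / 0 = 0` convention it takes a fixed arbitrary value when `ρ_Z(z) = 0`). -/
def margPolicy [Fintype S] [DecidableEq Z] (φ : S → Z) (ρ : S → ℝ) (π : S → A → ℝ)
    (z : Z) (a : A) : ℝ :=
  (∑ s : S, if φ s = z then ρ s * π s a else 0) / margDist φ ρ z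

/-- Log-linear (softmax) policy `π_θ(a|z)`. -/
def softmaxPol {d : ℕ} [Fintype A] (θ : A → Fin d → ℝ) (z : Fin d → ℝ) (a : A) : ℝ :=
  Real.exp (∑ i, θ a i * z i) / ∑ b : A, Real.exp (∑ i, θ b i * z i)

/-- Sum of absolute values of all partial derivatives of `L : ℝ^{d×|A|} → ℝ` at `θ`. -/
def gradL1 {d : ℕ} [Fintype A] [DecidableEq A] (L : (A → Fin d → ℝ) → ℝ)
    (θ : A → Fin d → ℝ) : ℝ :=
  ∑ a : A, ∑ i : Fin d, |fderiv ℝ L θ (Pi.single a (Pi.single i 1))|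

/-!
Let `V` be the value function of the learned policy and `Q` its action value. The performance
difference lemma writes the gap in performance as the expert-visitation average of
`∑ a, (π_{N,Z} - π*) * Q`. The one-step lookahead of the same `V` through the latent model gives a
function `Q_Z` on `Z × A`, and `Q` is split as `Q_Z ∘ φ` plus a remainder.

The remainder is bounded by the reward and transition errors of the latent model. They are moved
from the expert's visitation to `d^off` by Cauchy–Schwarz, at the price of the `χ²` divergence, and
Pinsker's inequality converts KL divergence into total variation.

The term in `Q_Z ∘ φ` sees the expert only through the joint law `m` of `(φ s, a)`. The cloned
policy satisfies `ν(z) * π_{N,Z}(a | z) = ν(z, a)` exactly for the empirical joint law `ν`, even at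
unvisited `z`, so this term is controlled by `2 * ∑ |ν - m|`. Since each cell of `ν` has variance
at most `m(z, a) / N`, Cauchy–Schwarz bounds the expected `ℓ¹` deviation by `√(|Z| |A| / N)`.
-/

section WeightedSums

variable {X : Type*} [Fintype X]

lemma abs_sum_mul_le_of_mem_stdSimplex {p f : X → ℝ} {C : ℝ} (hp : p ∈ stdSimplex ℝ X)
    (hf : ∀ x, |f x| ≤ C) : |∑ x, p x * f x| ≤ C :=
  calc |∑ x, p x * f x| ≤ ∑ x, |p x * f x| := abs_sum_le_sum_abs _ _
    _ ≤ ∑ x, p x * C := by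
        gcongr with x
        rw [abs_mul, abs_of_nonneg (hp.1 x)]
        exact mul_le_mul_of_nonneg_left (hf x) (hp.1 x)
    _ = C := by rw [← sum_mul, hp.2, one_mul]

lemma sum_mul_le_add_mul_sum_mul {p f g : X → ℝ} {b c : ℝ} (hp : p ∈ stdSimplex ℝ X)
    (hfg : ∀ x, f x ≤ b + c * g x) : ∑ x, p x * f x ≤ b + c * ∑ x, p x * g x :=
  calc ∑ x, p x * f x ≤ ∑ x, p x * (b + c * g x) :=
        sum_le_sum fun x _ => mul_le_mul_of_nonneg_left (hfg x) (hp.1 x)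
    _ = b + c * ∑ x, p x * g x := by
        simp only [mul_add, sum_add_distrib, ← sum_mul, hp.2, one_mul, mul_left_comm _ c, ← mul_sum]

lemma sum_mul_le_sqrt_mul_sqrt_of_weight {u q f : X → ℝ} (hq : ∀ x, 0 ≤ q x)
    (hu : ∀ x, q x = 0 → u x = 0) :
    ∑ x, u x * f x ≤ √(∑ x, u x ^ 2 / q x) * √(∑ x, q x * f x ^ 2) := by
  have huq : ∀ x, 0 ≤ u x ^ 2 / q x := fun x => div_nonneg (sq_nonneg _) (hq x)
  rw [← Real.sqrt_mul (sum_nonneg fun x _ => huq x)]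
  refine Real.le_sqrt_of_sq_le (sum_sq_le_sum_mul_sum_of_sq_le_mul univ (fun x _ => huq x)
    (fun x _ => mul_nonneg (hq x) (sq_nonneg _)) fun x _ => le_of_eq ?_)
  rcases eq_or_ne (q x) 0 with h | h
  · simp [h, hu x h]
  · field_simp

lemma sum_mul_le_sqrt_sum_mul_sq {q : X → ℝ} (hq : q ∈ stdSimplex ℝ X) (f : X → ℝ) :
    ∑ x, q x * f x ≤ √(∑ x, q x * f x ^ 2) := by
  simpa [sq, hq.2] using sum_mul_le_sqrt_mul_sqrt_of_weight (f := f) hq.1 fun _ => id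

lemma sum_mul_le_one_add_sqrt_dChi2_mul {p q : X → ℝ} (hq : q ∈ stdSimplex ℝ X)
    (hpq : ∀ x, q x = 0 → p x = 0) (f : X → ℝ) :
    ∑ x, p x * f x ≤ (1 + √(dChi2 p q)) * √(∑ x, q x * f x ^ 2) :=
  calc ∑ x, p x * f x = ∑ x, q x * f x + ∑ x, (p x - q x) * f x := by
        rw [← sum_add_distrib]
        exact sum_congr rfl fun x _ => by ring
    _ ≤ √(∑ x, q x * f x ^ 2) + √(dChi2 p q) * √(∑ x, q x * f x ^ 2) :=
        add_le_add (sum_mul_le_sqrt_sum_mul_sq hq f)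
          (sum_mul_le_sqrt_mul_sqrt_of_weight hq.1 fun x hx => by rw [hpq x hx, hx, sub_zero])
    _ = _ := by ring

lemma sum_mul_mean_le_one_add_sqrt_dChi2_mul {p q : X → ℝ} (hq : q ∈ stdSimplex ℝ X)
    (hpq : ∀ x, q x = 0 → p x = 0) {Y : Type*} [Fintype Y] (f : X → Y → ℝ) :
    ∑ x, p x * (1 / (Fintype.card Y : ℝ) * ∑ y, f x y) ≤
      (1 + √(dChi2 p q)) * √(∑ x, q x * (1 / (Fintype.card Y : ℝ) * ∑ y, f x y ^ 2)) := by
  refine (sum_mul_le_one_add_sqrt_dChi2_mul hq hpq _).trans ?_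
  gcongr with x
  · exact hq.1 x
  · simpa only [one_div_mul_eq_div, card_univ] using
      sum_div_card_sq_le_sum_sq_div_card (s := univ) (f := f x)

lemma abs_sum_mul_sub_sum_mul_le (p q : X → ℝ) {f : X → ℝ} {C : ℝ} (hf : ∀ x, |f x| ≤ C) :
    |∑ x, p x * f x - ∑ x, q x * f x| ≤ 2 * C * dTV p q :=
  calc |∑ x, p x * f x - ∑ x, q x * f x| = |∑ x, (p x - q x) * f x| := by
        simp only [sub_mul, sum_sub_distrib]
    _ ≤ ∑ x, |(p x - q x) * f x| := abs_sum_le_sum_abs _ _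
    _ ≤ ∑ x, |p x - q x| * C := by
        gcongr with x
        rw [abs_mul]
        exact mul_le_mul_of_nonneg_left (hf x) (abs_nonneg _)
    _ = 2 * C * dTV p q := by rw [← sum_mul, dTV]; ring

end WeightedSums

section Pinsker

open InformationTheory

/- The difference of the two sides has second derivative `4 * (log x - (1 - 1 / x)) ≥ 0`, and it
vanishes together with its first derivative at `1`. -/
lemma three_mul_sub_one_sq_le_mul_klFun {x : ℝ} (hx : 0 ≤ x) :
    3 * (x - 1) ^ 2 ≤ (2 * x + 4) * klFun x := by
  let g : ℝ → ℝ := fun y => (2 * y + 4) * klFun y - 3 * (y - 1) ^ 2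
  let g' : ℝ → ℝ := fun y => 2 * klFun y + (2 * y + 4) * Real.log y - 6 * (y - 1)
  have hlin (y : ℝ) : HasDerivAt (fun y : ℝ => 2 * y + 4) 2 y := by
    simpa using ((hasDerivAt_id y).const_mul 2).add_const 4
  have hg {y : ℝ} (hy : y ≠ 0) : HasDerivAt g (g' y) y := by
    refine (((hlin y).mul (hasDerivAt_klFun hy)).sub
      ((((hasDerivAt_id y).sub_const 1).pow 2).const_mul 3)).congr_deriv ?_
    simp only [g', id]
    ring
  have hg' {y : ℝ} (hy : y ≠ 0) : HasDerivAt g' (4 * (Real.log y - (1 - y⁻¹))) y := by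
    refine ((((hasDerivAt_klFun hy).const_mul 2).add
      ((hlin y).mul (Real.hasDerivAt_log hy))).sub
      (((hasDerivAt_id y).sub_const 1).const_mul 6)).congr_deriv ?_
    field_simp
    ring
  have hconv : ConvexOn ℝ (Set.Ici 0) g := by
    have hcont : Continuous g := by fun_prop
    refine convexOn_of_hasDerivWithinAt2_nonneg (convex_Ici 0) hcont.continuousOn (f' := g')
      (f'' := fun y => 4 * (Real.log y - (1 - y⁻¹))) ?_ ?_ ?_ <;>
      rw [interior_Ici] <;> intro y (hy : 0 < y)
    · exact (hg hy.ne').hasDerivWithinAt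
    · exact (hg' hy.ne').hasDerivWithinAt
    · linarith [Real.one_sub_inv_le_log_of_pos hy]
  have hmin : IsMinOn g (Set.Ici 0) 1 := hconv.isMinOn_of_rightDeriv_eq_zero (by simp) <| by
    rw [(hg one_ne_zero).hasDerivWithinAt.derivWithin (uniqueDiffWithinAt_Ioi 1)]
    simp [g', klFun_one]
  have : g 1 ≤ g x := hmin hx
  simp only [g, klFun_one] at this
  linarith

variable {X : Type*} [Fintype X]

lemma sum_mul_klFun_div_eq_dKL {p q : X → ℝ} (hsum : ∑ x, p x = ∑ x, q x)
    (hpq : ∀ x, q x = 0 → p x = 0) : ∑ x, q x * klFun (p x / q x) = dKL p q := by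
  have hx (x : X) : q x * klFun (p x / q x) = p x * Real.log (p x / q x) + q x - p x := by
    rcases eq_or_ne (q x) 0 with h | h
    · simp [h, hpq x h]
    · rw [klFun_apply]
      field_simp
  simp only [hx, sum_sub_distrib, sum_add_distrib, hsum, add_sub_cancel_right, dKL]

lemma dTV_sq_le_half_dKL {p q : X → ℝ} (hp : p ∈ stdSimplex ℝ X) (hq : q ∈ stdSimplex ℝ X)
    (hpq : ∀ x, q x = 0 → p x = 0) : dTV p q ^ 2 ≤ 1 / 2 * dKL p q := by
  have hratio (x : X) : 0 ≤ p x / q x := div_nonneg (hp.1 x) (hq.1 x)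
  have hpt (x : X) :
      |p x - q x| ^ 2 ≤ (2 * p x + 4 * q x) / 3 * (q x * klFun (p x / q x)) := by
    rcases eq_or_ne (q x) 0 with h | h
    · simp [h, hpq x h]
    · have hkl := mul_le_mul_of_nonneg_left (three_mul_sub_one_sq_le_mul_klFun (hratio x))
        (sq_nonneg (q x))
      have hp_eq : p x = q x * (p x / q x) := by field_simp
      generalize p x / q x = r at hkl hp_eq ⊢
      rw [sq_abs, hp_eq]
      linarith
  have hmass : ∑ x, (2 * p x + 4 * q x) / 3 = 2 := by
    rw [← sum_div, sum_add_distrib, ← mul_sum, ← mul_sum, hp.2, hq.2]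
    norm_num
  have hcs : (∑ x, |p x - q x|) ^ 2 ≤ 2 * dKL p q := by
    rw [← hmass, ← sum_mul_klFun_div_eq_dKL (hp.2.trans hq.2.symm) hpq]
    exact sum_sq_le_sum_mul_sum_of_sq_le_mul univ
      (fun x _ => by linarith [hp.1 x, hq.1 x])
      (fun x _ => mul_nonneg (hq.1 x) (klFun_nonneg (hratio x))) fun x _ => hpt x
  rw [dTV, mul_pow]
  linarith

end Pinsker

section Visitation

variable [Fintype S] [Fintype A] {P : S → A → S → ℝ} {R : S → A → ℝ} {π : S → A → ℝ}
  {μ : S → ℝ} {γ : ℝ}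

lemma sum_stateDist_succ_mul (P : S → A → S → ℝ) (π : S → A → ℝ) (μ : S → ℝ) (t : ℕ)
    (f : S → ℝ) :
    ∑ s', stateDist P π μ (t + 1) s' * f s' =
      ∑ s, stateDist P π μ t s * ∑ a, π s a * ∑ s', P s a s' * f s' := by
  simp only [stateDist, mul_sum, sum_mul]
  rw [sum_comm]
  refine sum_congr rfl fun s _ => ?_
  rw [sum_comm]
  exact sum_congr rfl fun a _ => sum_congr rfl fun s' _ => by ring

lemma stateDist_mem_stdSimplex (hP : ∀ s a, P s a ∈ stdSimplex ℝ S)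
    (hπ : ∀ s, π s ∈ stdSimplex ℝ A) (hμ : μ ∈ stdSimplex ℝ S) (t : ℕ) :
    stateDist P π μ t ∈ stdSimplex ℝ S := by
  induction t with
  | zero => exact hμ
  | succ t ih =>
    refine ⟨fun s' => sum_nonneg fun s _ => sum_nonneg fun a _ =>
      mul_nonneg (mul_nonneg ((hπ s).1 a) ((hP s a).1 s')) (ih.1 s), ?_⟩
    simpa [(hP _ _).2, (hπ _).2, ih.2] using sum_stateDist_succ_mul P π μ t fun _ => 1

lemma hasSum_visitation_mul (hP : ∀ s a, P s a ∈ stdSimplex ℝ S)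
    (hπ : ∀ s, π s ∈ stdSimplex ℝ A) (hμ : μ ∈ stdSimplex ℝ S) (hγ0 : 0 ≤ γ) (hγ1 : γ < 1)
    (f : S → ℝ) :
    HasSum (fun t => (1 - γ) * (γ ^ t * ∑ s, stateDist P π μ t s * f s))
      (∑ s, visitation P π μ γ s * f s) := by
  have hd := stateDist_mem_stdSimplex hP hπ hμ
  have hsummable (s : S) : Summable fun t => γ ^ t * stateDist P π μ t s :=
    .of_nonneg_of_le (fun t => mul_nonneg (pow_nonneg hγ0 t) ((hd t).1 s))
      (fun t => mul_le_of_le_one_right (pow_nonneg hγ0 t) (mem_Icc_of_mem_stdSimplex (hd t) s).2)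
      (summable_geometric_of_lt_one hγ0 hγ1)
  refine (hasSum_sum fun s _ =>
    ((hsummable s).hasSum.mul_left (1 - γ)).mul_right (f s)).congr_fun fun t => ?_
  simp only [mul_sum]
  exact sum_congr rfl fun s _ => by ring

lemma visitation_mem_stdSimplex (hP : ∀ s a, P s a ∈ stdSimplex ℝ S)
    (hπ : ∀ s, π s ∈ stdSimplex ℝ A) (hμ : μ ∈ stdSimplex ℝ S) (hγ0 : 0 ≤ γ) (hγ1 : γ < 1) :
    visitation P π μ γ ∈ stdSimplex ℝ S := by
  have hd := stateDist_mem_stdSimplex hP hπ hμ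
  refine ⟨fun s => mul_nonneg (sub_nonneg.2 hγ1.le) (tsum_nonneg fun t =>
    mul_nonneg (pow_nonneg hγ0 t) ((hd t).1 s)), ?_⟩
  have hmass := hasSum_visitation_mul hP hπ hμ hγ0 hγ1 fun _ => 1
  simp only [mul_one, (hd _).2] at hmass
  rw [hmass.unique ((hasSum_geometric_of_lt_one hγ0 hγ1).mul_left (1 - γ)),
    mul_inv_cancel₀ (sub_pos.2 hγ1).ne']

lemma sum_visitation_mul_eq (hP : ∀ s a, P s a ∈ stdSimplex ℝ S)
    (hπ : ∀ s, π s ∈ stdSimplex ℝ A) (hμ : μ ∈ stdSimplex ℝ S) (hγ0 : 0 ≤ γ) (hγ1 : γ < 1)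
    (f : S → ℝ) :
    ∑ s, visitation P π μ γ s * f s = (1 - γ) * ∑ s, μ s * f s +
      γ * ∑ s, visitation P π μ γ s * ∑ a, π s a * ∑ s', P s a s' * f s' := by
  have htail := (hasSum_visitation_mul hP hπ hμ hγ0 hγ1
    fun s => ∑ a, π s a * ∑ s', P s a s' * f s').mul_left γ
  simp only [← sum_stateDist_succ_mul] at htail
  have hall := hasSum_visitation_mul hP hπ hμ hγ0 hγ1 f
  rw [← hasSum_nat_add_iff' 1] at hall
  have := hall.unique (htail.congr_fun fun t => by ring)
  simp only [sum_range_one, pow_zero, one_mul, stateDist] at this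
  linarith

lemma one_sub_mul_perf (hP : ∀ s a, P s a ∈ stdSimplex ℝ S)
    (hπ : ∀ s, π s ∈ stdSimplex ℝ A) (hμ : μ ∈ stdSimplex ℝ S) (hγ0 : 0 ≤ γ) (hγ1 : γ < 1) :
    (1 - γ) * perf P R π μ γ = ∑ s, visitation P π μ γ s * ∑ a, π s a * R s a := by
  rw [← (hasSum_visitation_mul hP hπ hμ hγ0 hγ1 fun s => ∑ a, π s a * R s a).tsum_eq,
    tsum_mul_left, perf]
  refine congrArg _ (tsum_congr fun t => ?_)
  simp only [mul_sum]
  exact sum_congr rfl fun s _ => sum_congr rfl fun a _ => by ring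

end Visitation

section Bellman

variable [Fintype S]

/-- The one-step lookahead `R(x, a) + γ 𝔼_{s' ∼ P(x, a)} V(s')`: the action value `Q` attached to
the state value `V`. The model `(P, R)` is indexed by an arbitrary type `X`, so that it may live
on the states or on the representation space. -/
def actionValue {X : Type*} (P : X → A → S → ℝ) (R : X → A → ℝ) (γ : ℝ) (V : S → ℝ) (x : X)
    (a : A) : ℝ :=
  R x a + γ * ∑ s', P x a s' * V s'

lemma abs_actionValue_le {X : Type*} {P : X → A → S → ℝ} {R : X → A → ℝ} {γ r v : ℝ} {V : S → ℝ}
    (hP : ∀ x a, P x a ∈ stdSimplex ℝ S) (hγ0 : 0 ≤ γ) (hR : ∀ x a, |R x a| ≤ r)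
    (hV : ∀ s, |V s| ≤ v) (x : X) (a : A) : |actionValue P R γ V x a| ≤ r + γ * v := by
  refine (abs_add_le _ _).trans (add_le_add (hR x a) ?_)
  rw [abs_mul, abs_of_nonneg hγ0]
  exact mul_le_mul_of_nonneg_left (abs_sum_mul_le_of_mem_stdSimplex (hP x a) hV) hγ0

lemma abs_actionValue_sub_le {X Y : Type*} (P : X → A → S → ℝ) (R : X → A → ℝ)
    (P' : Y → A → S → ℝ) (R' : Y → A → ℝ) {γ v : ℝ} {V : S → ℝ} (hγ0 : 0 ≤ γ)
    (hV : ∀ s, |V s| ≤ v) (x : X) (y : Y) (a : A) :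
    |actionValue P R γ V x a - actionValue P' R' γ V y a| ≤
      |R x a - R' y a| + 2 * γ * v * dTV (P x a) (P' y a) :=
  calc |actionValue P R γ V x a - actionValue P' R' γ V y a|
      = |(R x a - R' y a) + γ * (∑ s', P x a s' * V s' - ∑ s', P' y a s' * V s')| := by
        rw [actionValue, actionValue]
        ring_nf
    _ ≤ |R x a - R' y a| + γ * |∑ s', P x a s' * V s' - ∑ s', P' y a s' * V s'| := by
        rw [← abs_of_nonneg hγ0, ← abs_mul, abs_of_nonneg hγ0]
        exact abs_add_le _ _
    _ ≤ |R x a - R' y a| + γ * (2 * v * dTV (P x a) (P' y a)) := by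
        gcongr
        exact abs_sum_mul_sub_sum_mul_le _ _ hV
    _ = _ := by ring

variable [Fintype A] {P : S → A → S → ℝ} {R : S → A → ℝ} {π π' : S → A → ℝ} {μ V : S → ℝ} {γ : ℝ}

/-- The Bellman operator of the policy `π`; its fixed point is the value function of `π`. -/
def bellmanOp (P : S → A → S → ℝ) (R : S → A → ℝ) (π : S → A → ℝ) (γ : ℝ) (V : S → ℝ) (s : S) :
    ℝ :=
  ∑ a, π s a * actionValue P R γ V s a

lemma contractingWith_bellmanOp (hP : ∀ s a, P s a ∈ stdSimplex ℝ S)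
    (hπ : ∀ s, π s ∈ stdSimplex ℝ A) (hγ0 : 0 ≤ γ) (hγ1 : γ < 1) :
    ContractingWith ⟨γ, hγ0⟩ (bellmanOp P R π γ) := by
  refine ⟨hγ1, LipschitzWith.of_dist_le_mul fun V W =>
    (dist_pi_le_iff (mul_nonneg hγ0 dist_nonneg)).2 fun s => ?_⟩
  have hdiff : bellmanOp P R π γ V s - bellmanOp P R π γ W s =
      ∑ a, π s a * actionValue P 0 γ (V - W) s a := by
    simp only [bellmanOp, actionValue, ← sum_sub_distrib, Pi.sub_apply, mul_sub]
    simp [mul_sub, mul_add]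
  have hVW (s' : S) : |(V - W) s'| ≤ dist V W := dist_le_pi_dist V W s'
  rw [Real.dist_eq, hdiff]
  refine abs_sum_mul_le_of_mem_stdSimplex (hπ s) fun a => ?_
  simpa using abs_actionValue_le (r := 0) hP hγ0 (by simp) hVW s a

lemma abs_le_of_isFixedPt_bellmanOp {Rmax : ℝ} (hP : ∀ s a, P s a ∈ stdSimplex ℝ S)
    (hπ : ∀ s, π s ∈ stdSimplex ℝ A) (hR : ∀ s a, |R s a| ≤ Rmax) (hγ0 : 0 ≤ γ) (hγ1 : γ < 1)
    (hV : Function.IsFixedPt (bellmanOp P R π γ) V) (s : S) : |V s| ≤ Rmax / (1 - γ) := by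
  have : Nonempty S := ⟨s⟩
  have hnorm : ‖V‖ ≤ Rmax + γ * ‖V‖ := (pi_norm_le_iff_of_nonempty V).2 fun s => by
    rw [← congr_fun hV s]
    exact abs_sum_mul_le_of_mem_stdSimplex (hπ s)
      fun a => abs_actionValue_le hP hγ0 hR (norm_le_pi_norm V) s a
  refine (norm_le_pi_norm V s).trans ((le_div_iff₀ (sub_pos.2 hγ1)).2 ?_)
  linarith

lemma one_sub_mul_perf_sub_of_isFixedPt (hP : ∀ s a, P s a ∈ stdSimplex ℝ S)
    (hπ' : ∀ s, π' s ∈ stdSimplex ℝ A) (hμ : μ ∈ stdSimplex ℝ S) (hγ0 : 0 ≤ γ) (hγ1 : γ < 1)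
    (hV : Function.IsFixedPt (bellmanOp P R π γ) V) :
    (1 - γ) * (perf P R π' μ γ - ∑ s, μ s * V s) =
      ∑ s, visitation P π' μ γ s * ∑ a, (π' s a - π s a) * actionValue P R γ V s a := by
  have hflow := sum_visitation_mul_eq hP hπ' hμ hγ0 hγ1 V
  have hperf := one_sub_mul_perf (R := R) hP hπ' hμ hγ0 hγ1
  have hbellman (s : S) : ∑ a, (π' s a - π s a) * actionValue P R γ V s a =
      ∑ a, π' s a * R s a + γ * (∑ a, π' s a * ∑ s', P s a s' * V s') - V s := by
    conv_rhs => rw [← congr_fun hV s]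
    simp only [bellmanOp, sub_mul, sum_sub_distrib, sub_left_inj]
    simp only [actionValue, mul_add, sum_add_distrib, mul_left_comm _ γ, ← mul_sum]
  simp only [hbellman, mul_sub, mul_add, sum_sub_distrib, sum_add_distrib, mul_left_comm _ γ,
    ← mul_sum]
  linarith

lemma performance_difference (hP : ∀ s a, P s a ∈ stdSimplex ℝ S)
    (hπ : ∀ s, π s ∈ stdSimplex ℝ A) (hπ' : ∀ s, π' s ∈ stdSimplex ℝ A)
    (hμ : μ ∈ stdSimplex ℝ S) (hγ0 : 0 ≤ γ) (hγ1 : γ < 1)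
    (hV : Function.IsFixedPt (bellmanOp P R π γ) V) :
    (1 - γ) * (perf P R π μ γ - perf P R π' μ γ) =
      ∑ s, visitation P π' μ γ s * ∑ a, (π s a - π' s a) * actionValue P R γ V s a := by
  have hself : perf P R π μ γ = ∑ s, μ s * V s := by
    simpa [sub_eq_zero, (sub_pos.2 hγ1).ne'] using
      one_sub_mul_perf_sub_of_isFixedPt hP hπ hμ hγ0 hγ1 hV
  rw [hself, ← neg_sub (perf P R π' μ γ), mul_neg,
    one_sub_mul_perf_sub_of_isFixedPt hP hπ' hμ hγ0 hγ1 hV]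
  simp only [← neg_sub (π _ _), neg_mul, sum_neg_distrib, mul_neg, neg_neg]

end Bellman

section ModelError

variable [Fintype S] [Fintype A] {φ : S → Z} {P : S → A → S → ℝ} {R : S → A → ℝ}
  {PZ : Z → A → S → ℝ} {RZ : Z → A → ℝ} {d q : S → ℝ} {γ : ℝ}

/-- The reward error `J_R` of a latent model: root mean square over `s ∼ q` and uniform `a`. -/
def rewardErr (q : S → ℝ) (φ : S → Z) (R : S → A → ℝ) (RZ : Z → A → ℝ) : ℝ :=
  √(∑ s, q s * ((1 / (Fintype.card A : ℝ)) * ∑ a, (R s a - RZ (φ s) a) ^ 2))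

/-- The transition error `J_T` of a latent model: root of half the mean KL divergence over `s ∼ q`
and uniform `a`, so that it dominates the root mean square total variation distance. -/
def transErr (q : S → ℝ) (φ : S → Z) (P : S → A → S → ℝ) (PZ : Z → A → S → ℝ) : ℝ :=
  √((1 / 2) * ∑ s, q s * ((1 / (Fintype.card A : ℝ)) * ∑ a, dKL (P s a) (PZ (φ s) a)))

/-- The representation error `ε` of a latent model `(PZ, RZ)` of the environment `(P, R)`. -/
def modelErr (q : S → ℝ) (φ : S → Z) (P : S → A → S → ℝ) (R : S → A → ℝ) (PZ : Z → A → S → ℝ)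
    (RZ : Z → A → ℝ) (Rmax γ : ℝ) : ℝ :=
  (Fintype.card A : ℝ) / (1 - γ) * rewardErr q φ R RZ +
    2 * γ * (Fintype.card A : ℝ) * Rmax / (1 - γ) ^ 2 * transErr q φ P PZ

lemma sum_mul_mean_abs_reward_sub_le (hq : q ∈ stdSimplex ℝ S) (hdq : ∀ s, q s = 0 → d s = 0) :
    ∑ s, d s * (1 / (Fintype.card A : ℝ) * ∑ a, |R s a - RZ (φ s) a|) ≤
      (1 + √(dChi2 d q)) * rewardErr q φ R RZ := by
  simpa only [sq_abs, rewardErr] using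
    sum_mul_mean_le_one_add_sqrt_dChi2_mul hq hdq fun s a => |R s a - RZ (φ s) a|

lemma sum_mul_mean_dTV_le (hP : ∀ s a, P s a ∈ stdSimplex ℝ S)
    (hPZ : ∀ z a, PZ z a ∈ stdSimplex ℝ S) (hq : q ∈ stdSimplex ℝ S)
    (hdq : ∀ s, q s = 0 → d s = 0)
    (hPPZ : ∀ s a s', q s ≠ 0 → PZ (φ s) a s' = 0 → P s a s' = 0) :
    ∑ s, d s * (1 / (Fintype.card A : ℝ) * ∑ a, dTV (P s a) (PZ (φ s) a)) ≤
      (1 + √(dChi2 d q)) * transErr q φ P PZ := by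
  have htrans : transErr q φ P PZ =
      √(∑ s, q s * (1 / (Fintype.card A : ℝ) * ∑ a, 1 / 2 * dKL (P s a) (PZ (φ s) a))) := by
    simp only [transErr, mul_sum, mul_left_comm (1 / 2 : ℝ)]
  refine (sum_mul_mean_le_one_add_sqrt_dChi2_mul hq hdq _).trans ?_
  rw [htrans]
  refine mul_le_mul_of_nonneg_left (Real.sqrt_le_sqrt (sum_le_sum fun s _ => ?_)) (by positivity)
  rcases eq_or_ne (q s) 0 with h | h
  · simp [h]
  · gcongr with a
    · exact hq.1 s
    · exact dTV_sq_le_half_dKL (hP s a) (hPZ (φ s) a) fun s' => hPPZ s a s' h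

lemma sum_mul_sum_abs_actionValue_sub_le [Nonempty A] {V : S → ℝ} {Rmax : ℝ}
    (hP : ∀ s a, P s a ∈ stdSimplex ℝ S) (hPZ : ∀ z a, PZ z a ∈ stdSimplex ℝ S)
    (hRmax : 0 ≤ Rmax) (hγ0 : 0 ≤ γ) (hγ1 : γ < 1) (hV : ∀ s, |V s| ≤ Rmax / (1 - γ))
    (hd : ∀ s, 0 ≤ d s) (hq : q ∈ stdSimplex ℝ S) (hdq : ∀ s, q s = 0 → d s = 0)
    (hPPZ : ∀ s a s', q s ≠ 0 → PZ (φ s) a s' = 0 → P s a s' = 0) :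
    ∑ s, d s * ∑ a, |actionValue P R γ V s a - actionValue PZ RZ γ V (φ s) a| ≤
      (1 - γ) * ((1 + √(dChi2 d q)) * modelErr q φ P R PZ RZ Rmax γ) := by
  have hγ : 0 < 1 - γ := sub_pos.2 hγ1
  have hA : (Fintype.card A : ℝ) ≠ 0 := Nat.cast_ne_zero.2 Fintype.card_ne_zero
  have hreward := sum_mul_mean_abs_reward_sub_le (R := R) (RZ := RZ) (φ := φ) hq hdq
  have htrans := sum_mul_mean_dTV_le hP hPZ hq hdq hPPZ
  calc ∑ s, d s * ∑ a, |actionValue P R γ V s a - actionValue PZ RZ γ V (φ s) a|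
      ≤ ∑ s, d s * ∑ a, (|R s a - RZ (φ s) a| +
          2 * γ * (Rmax / (1 - γ)) * dTV (P s a) (PZ (φ s) a)) := by
        gcongr with s _ a
        · exact hd s
        · exact abs_actionValue_sub_le _ _ _ _ hγ0 hV _ _ _
    _ = Fintype.card A * ∑ s, d s * (1 / (Fintype.card A : ℝ) * ∑ a, |R s a - RZ (φ s) a|) +
        Fintype.card A * (2 * γ * (Rmax / (1 - γ))) *
          ∑ s, d s * (1 / (Fintype.card A : ℝ) * ∑ a, dTV (P s a) (PZ (φ s) a)) := by
        rw [mul_sum, mul_sum, ← sum_add_distrib]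
        refine sum_congr rfl fun s _ => ?_
        rw [sum_add_distrib, ← mul_sum]
        field_simp
    _ ≤ Fintype.card A * ((1 + √(dChi2 d q)) * rewardErr q φ R RZ) +
        Fintype.card A * (2 * γ * (Rmax / (1 - γ))) *
          ((1 + √(dChi2 d q)) * transErr q φ P PZ) := by
        gcongr
    _ = _ := by
        rw [modelErr]
        field_simp

end ModelError

section LatentPolicy

variable [Fintype S] [Fintype A]

lemma abs_sum_mul_sum_sub_mul_le {d : S → ℝ} {π π' : S → A → ℝ} (hd : ∀ s, 0 ≤ d s)
    (hπ : ∀ s, π s ∈ stdSimplex ℝ A) (hπ' : ∀ s, π' s ∈ stdSimplex ℝ A) (F : S → A → ℝ) :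
    |∑ s, d s * ∑ a, (π s a - π' s a) * F s a| ≤ ∑ s, d s * ∑ a, |F s a| := by
  refine (abs_sum_le_sum_abs _ _).trans (sum_le_sum fun s _ => ?_)
  rw [abs_mul, abs_of_nonneg (hd s)]
  refine mul_le_mul_of_nonneg_left
    ((abs_sum_le_sum_abs _ _).trans (sum_le_sum fun a _ => ?_)) (hd s)
  rw [abs_mul, ← Real.dist_eq]
  exact mul_le_of_le_one_left (abs_nonneg _) (Real.dist_le_of_mem_Icc_01
    (mem_Icc_of_mem_stdSimplex (hπ s) a) (mem_Icc_of_mem_stdSimplex (hπ' s) a))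

/-- The law of a demonstration `(s, a)` with `s ∼ d` and `a ∼ π(· | s)`. -/
def demoLaw (d : S → ℝ) (π : S → A → ℝ) (x : S × A) : ℝ :=
  d x.1 * π x.1 x.2

lemma demoLaw_mem_stdSimplex {d : S → ℝ} {π : S → A → ℝ} (hd : d ∈ stdSimplex ℝ S)
    (hπ : ∀ s, π s ∈ stdSimplex ℝ A) : demoLaw d π ∈ stdSimplex ℝ (S × A) := by
  refine ⟨fun x => mul_nonneg (hd.1 x.1) ((hπ x.1).1 x.2), ?_⟩
  simp only [demoLaw, Fintype.sum_prod_type, ← mul_sum, (hπ _).2, mul_one, hd.2]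

variable [Fintype Z] [DecidableEq Z]

lemma sum_margDist_mul (φ : S → Z) (d : S → ℝ) (G : Z → ℝ) :
    ∑ z, margDist φ d z * G z = ∑ s, d s * G (φ s) := by
  simp only [margDist, sum_mul, ite_mul, zero_mul]
  rw [sum_comm]
  simp

lemma margDist_mem_stdSimplex {d : S → ℝ} (hd : d ∈ stdSimplex ℝ S) (φ : S → Z) :
    margDist φ d ∈ stdSimplex ℝ Z :=
  ⟨fun z => sum_nonneg fun s _ => by split_ifs <;> simp [hd.1 s],
    by simpa [hd.2] using sum_margDist_mul φ d 1⟩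

/-- The `ℓ¹` distance between a joint weight `m` on `Z × A` and the weight obtained from it by
keeping the marginal on `Z` and drawing the action from the policy `q`. -/
def condErr (m : Z × A → ℝ) (q : Z → A → ℝ) : ℝ :=
  ∑ z, ∑ a, |(∑ b, m (z, b)) * q z a - m (z, a)|

variable [DecidableEq A]

lemma sum_mul_sum_comp_sub_mul_comp {π : S → A → ℝ} (hπ : ∀ s, π s ∈ stdSimplex ℝ A)
    (φ : S → Z) (d : S → ℝ) (q F : Z → A → ℝ) :
    ∑ s, d s * ∑ a, (q (φ s) a - π s a) * F (φ s) a =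
      ∑ z, ∑ a, ((∑ b, margDist (Prod.map φ id) (demoLaw d π) (z, b)) * q z a -
        margDist (Prod.map φ id) (demoLaw d π) (z, a)) * F z a := by
  let G : Z → ℝ := fun z => ∑ b, q z b * F z b
  have hcond (s : S) : d s * ∑ a, (q (φ s) a - π s a) * F (φ s) a =
      ∑ a, demoLaw d π (s, a) * (G (φ s) - F (φ s) a) := by
    simp only [demoLaw, G, mul_sub, sub_mul, sum_sub_distrib, ← sum_mul, ← mul_sum, (hπ s).2,
      one_mul, mul_assoc]
  simp only [hcond]
  rw [← Fintype.sum_prod_type fun x : S × A => demoLaw d π x * (G (φ x.1) - F (φ x.1) x.2)]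
  refine (sum_margDist_mul (Prod.map φ id) (demoLaw d π) fun k => G k.1 - F k.1 k.2).symm.trans ?_
  simp only [Fintype.sum_prod_type, mul_sub, sub_mul, sum_sub_distrib, ← sum_mul, mul_assoc,
    ← mul_sum, G]

lemma abs_sum_mul_sum_comp_sub_mul_comp_le {π : S → A → ℝ} (hπ : ∀ s, π s ∈ stdSimplex ℝ A)
    (φ : S → Z) (d : S → ℝ) (q : Z → A → ℝ) {F : Z → A → ℝ} {C : ℝ} (hF : ∀ z a, |F z a| ≤ C) :
    |∑ s, d s * ∑ a, (q (φ s) a - π s a) * F (φ s) a| ≤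
      C * condErr (margDist (Prod.map φ id) (demoLaw d π)) q := by
  rw [sum_mul_sum_comp_sub_mul_comp hπ, condErr, mul_sum]
  refine (abs_sum_le_sum_abs _ _).trans (sum_le_sum fun z _ => ?_)
  rw [mul_sum]
  refine (abs_sum_le_sum_abs _ _).trans (sum_le_sum fun a _ => ?_)
  rw [abs_mul, mul_comm C]
  exact mul_le_mul_of_nonneg_left (hF z a) (abs_nonneg _)

lemma perfDiff_comp_le [Nonempty A] {P : S → A → S → ℝ} {R : S → A → ℝ} {μ q : S → ℝ}
    {γ Rmax : ℝ} {π : S → A → ℝ} {φ : S → Z} {PZ : Z → A → S → ℝ} {RZ πZ : Z → A → ℝ}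
    (hP : ∀ s a, P s a ∈ stdSimplex ℝ S) (hPZ : ∀ z a, PZ z a ∈ stdSimplex ℝ S)
    (hRmax : 0 ≤ Rmax) (hR : ∀ s a, |R s a| ≤ Rmax) (hRZ : ∀ z a, |RZ z a| ≤ Rmax)
    (hμ : μ ∈ stdSimplex ℝ S) (hγ0 : 0 ≤ γ) (hγ1 : γ < 1) (hπ : ∀ s, π s ∈ stdSimplex ℝ A)
    (hπZ : ∀ z, πZ z ∈ stdSimplex ℝ A) (hq : q ∈ stdSimplex ℝ S)
    (hdq : ∀ s, q s = 0 → visitation P π μ γ s = 0)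
    (hPPZ : ∀ s a s', q s ≠ 0 → PZ (φ s) a s' = 0 → P s a s' = 0) :
    perfDiff P R μ γ (fun s => πZ (φ s)) π ≤
      (1 + √(dChi2 (visitation P π μ γ) q)) * modelErr q φ P R PZ RZ Rmax γ +
        Rmax / (1 - γ) ^ 2 *
          condErr (margDist (Prod.map φ id) (demoLaw (visitation P π μ γ) π)) πZ := by
  have hγ : 0 < 1 - γ := sub_pos.2 hγ1
  set d := visitation P π μ γ with hd_def
  have hd : d ∈ stdSimplex ℝ S := visitation_mem_stdSimplex hP hπ hμ hγ0 hγ1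
  obtain ⟨V, hV⟩ : ∃ V, Function.IsFixedPt (bellmanOp P R (fun s => πZ (φ s)) γ) V :=
    ⟨_, (contractingWith_bellmanOp hP (fun s => hπZ (φ s)) hγ0 hγ1).fixedPoint_isFixedPt⟩
  have hVmax := abs_le_of_isFixedPt_bellmanOp hP (fun s => hπZ (φ s)) hR hγ0 hγ1 hV
  have hQZ (z : Z) (a : A) : |actionValue PZ RZ γ V z a| ≤ Rmax / (1 - γ) := by
    convert abs_actionValue_le hPZ hγ0 hRZ hVmax z a using 1
    field_simp
    ring
  have hsplit : (1 - γ) * perfDiff P R μ γ (fun s => πZ (φ s)) π ≤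
      |∑ s, d s * ∑ a, (πZ (φ s) a - π s a) *
        (actionValue P R γ V s a - actionValue PZ RZ γ V (φ s) a)| +
      |∑ s, d s * ∑ a, (πZ (φ s) a - π s a) * actionValue PZ RZ γ V (φ s) a| := by
    rw [perfDiff, ← abs_of_pos hγ, ← abs_mul,
      performance_difference hP (fun s => hπZ (φ s)) hπ hμ hγ0 hγ1 hV]
    refine le_of_eq_of_le (congrArg _ ?_) (abs_add_le _ _)
    simp only [← sum_add_distrib, ← mul_add, sub_add_cancel, ← hd_def]
  have hmodel := (abs_sum_mul_sum_sub_mul_le hd.1 (fun s => hπZ (φ s)) hπ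
    fun s a => actionValue P R γ V s a - actionValue PZ RZ γ V (φ s) a).trans
    (sum_mul_sum_abs_actionValue_sub_le (R := R) (RZ := RZ) hP hPZ hRmax hγ0 hγ1 hVmax hd.1 hq
      hdq hPPZ)
  have hlatent := abs_sum_mul_sum_comp_sub_mul_comp_le hπ φ d πZ hQZ
  refine le_of_mul_le_mul_left ((hsplit.trans (add_le_add hmodel hlatent)).trans_eq ?_) hγ
  field_simp

end LatentPolicy

section IIDSample

variable {ι X : Type*} [Fintype ι] [Fintype X]

/-- The law of an i.i.d. sample with common distribution `w`, indexed by `ι`. -/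
def iidLaw (w : X → ℝ) (ω : ι → X) : ℝ :=
  ∏ j, w (ω j)

variable [DecidableEq ι]

lemma sum_iidLaw_mul_prod (w : X → ℝ) (h : ι → X → ℝ) :
    ∑ ω, iidLaw w ω * ∏ j, h j (ω j) = ∏ j, ∑ x, w x * h j x := by
  simp only [iidLaw, ← prod_mul_distrib, Fintype.prod_sum]

lemma iidLaw_mem_stdSimplex {w : X → ℝ} (hw : w ∈ stdSimplex ℝ X) :
    iidLaw w ∈ stdSimplex ℝ (ι → X) :=
  ⟨fun ω => prod_nonneg fun j _ => hw.1 (ω j),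
    by simpa [hw.2] using sum_iidLaw_mul_prod w fun (_ : ι) _ => 1⟩

lemma sum_iidLaw_mul_apply_mul_apply {w g : X → ℝ} (hw : ∑ x, w x = 1)
    (hg : ∑ x, w x * g x = 0) (i j : ι) :
    ∑ ω, iidLaw w ω * (g (ω i) * g (ω j)) = if i = j then ∑ x, w x * g x ^ 2 else 0 := by
  have hprod (ω : ι → X) : g (ω i) * g (ω j) =
      ∏ k, (if k = i then g (ω k) else 1) * if k = j then g (ω k) else 1 := by
    rw [prod_mul_distrib]
    simp
  simp only [hprod]
  refine (sum_iidLaw_mul_prod w fun k x =>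
    (if k = i then g x else 1) * if k = j then g x else 1).trans ?_
  split_ifs with hij
  · subst hij
    rw [prod_eq_single i (fun k _ hk => by simp [hk, hw]) (by simp)]
    simp [sq]
  · exact prod_eq_zero (mem_univ i) (by simpa [hij] using hg)

lemma sum_iidLaw_mul_sum_sq {w g : X → ℝ} (hw : ∑ x, w x = 1) (hg : ∑ x, w x * g x = 0) :
    ∑ ω : ι → X, iidLaw w ω * (∑ j, g (ω j)) ^ 2 = Fintype.card ι * ∑ x, w x * g x ^ 2 := by
  calc ∑ ω : ι → X, iidLaw w ω * (∑ j, g (ω j)) ^ 2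
      = ∑ i, ∑ j, ∑ ω : ι → X, iidLaw w ω * (g (ω i) * g (ω j)) := by
        simp only [sq, sum_mul_sum]
        simp only [mul_sum]
        rw [sum_comm]
        exact sum_congr rfl fun i _ => sum_comm
    _ = Fintype.card ι * ∑ x, w x * g x ^ 2 := by
        simp [sum_iidLaw_mul_apply_mul_apply hw hg]

lemma sum_iidLaw_mul_abs_mean_sub_le [Nonempty ι] {w : X → ℝ} (hw : w ∈ stdSimplex ℝ X)
    (f : X → ℝ) :
    ∑ ω : ι → X, iidLaw w ω * |(∑ j, f (ω j)) / Fintype.card ι - ∑ x, w x * f x| ≤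
      √((∑ x, w x * f x ^ 2) / Fintype.card ι) := by
  set m := ∑ x, w x * f x with hm
  have hn : (Fintype.card ι : ℝ) ≠ 0 := Nat.cast_ne_zero.2 Fintype.card_ne_zero
  have hcenter : ∑ x, w x * (f x - m) = 0 := by
    simp [mul_sub, ← sum_mul, hw.2, hm]
  have hvar : ∑ x, w x * (f x - m) ^ 2 = ∑ x, w x * f x ^ 2 - m ^ 2 := by
    have (x : X) : w x * (f x - m) ^ 2 = w x * f x ^ 2 - 2 * m * (w x * f x) + w x * m ^ 2 := by
      ring
    simp only [this, sum_add_distrib, sum_sub_distrib, ← mul_sum, ← sum_mul, hw.2, ← hm]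
    ring
  have hmean (ω : ι → X) : (∑ j, f (ω j)) / Fintype.card ι - m =
      (∑ j, (f (ω j) - m)) / Fintype.card ι := by
    simp [sub_div, hn]
  refine (sum_mul_le_sqrt_sum_mul_sq (iidLaw_mem_stdSimplex hw) _).trans (Real.sqrt_le_sqrt ?_)
  simp only [sq_abs, hmean, div_pow, ← mul_div_assoc, ← sum_div,
    sum_iidLaw_mul_sum_sq hw.2 hcenter, hvar]
  rw [sq (Fintype.card ι : ℝ), mul_div_mul_left _ _ hn]
  gcongr
  linarith [sq_nonneg m]

/-- The empirical distribution of a finite sample. -/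
def empiricalDist {K : Type*} [DecidableEq K] (D : ι → K) (k : K) : ℝ :=
  #{j | D j = k} / Fintype.card ι

lemma sum_iidLaw_mul_sum_abs_empiricalDist_sub_le [Nonempty ι] {K : Type*} [Fintype K]
    [DecidableEq K] {w : X → ℝ} (hw : w ∈ stdSimplex ℝ X) (c : X → K) :
    ∑ ω : ι → X, iidLaw w ω *
        ∑ k, |empiricalDist (fun j => c (ω j)) k - margDist c w k| ≤
      √(Fintype.card K / Fintype.card ι) := by
  have hmarg := margDist_mem_stdSimplex hw c
  have hcell (k : K) : ∑ ω : ι → X, iidLaw w ω *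
      |empiricalDist (fun j => c (ω j)) k - margDist c w k| ≤
        √(margDist c w k * (1 / Fintype.card ι)) := by
    simpa [empiricalDist, margDist, div_eq_mul_inv] using
      sum_iidLaw_mul_abs_mean_sub_le (ι := ι) hw fun x => if c x = k then 1 else 0
  calc ∑ ω : ι → X, iidLaw w ω * ∑ k, |empiricalDist (fun j => c (ω j)) k - margDist c w k|
      = ∑ k, ∑ ω : ι → X, iidLaw w ω *
          |empiricalDist (fun j => c (ω j)) k - margDist c w k| := by
        simp only [mul_sum]
        exact sum_comm
    _ ≤ ∑ k, √(margDist c w k) * √(1 / Fintype.card ι) :=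
        sum_le_sum fun k _ => (hcell k).trans_eq (Real.sqrt_mul (hmarg.1 k) _)
    _ ≤ √(∑ k, margDist c w k) * √(∑ _k : K, 1 / (Fintype.card ι : ℝ)) :=
        Real.sum_sqrt_mul_sqrt_le univ hmarg.1 fun _ => by positivity
    _ = √(Fintype.card K / Fintype.card ι) := by
        simp [hmarg.2, div_eq_mul_inv]

end IIDSample

section BehavioralCloning

variable [Fintype A]

lemma condErr_le_two_mul_sum_abs_sub [Fintype Z] {m ν : Z × A → ℝ} {q : Z → A → ℝ}
    (hq : ∀ z, q z ∈ stdSimplex ℝ A) (hν : ∀ z a, (∑ b, ν (z, b)) * q z a = ν (z, a)) :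
    condErr m q ≤ 2 * ∑ k, |ν k - m k| := by
  have hcell (z : Z) : ∑ a, |(∑ b, m (z, b)) * q z a - m (z, a)| ≤
      2 * ∑ a, |ν (z, a) - m (z, a)| :=
    calc ∑ a, |(∑ b, m (z, b)) * q z a - m (z, a)|
        ≤ ∑ a, (|ν (z, a) - m (z, a)| + |∑ b, (ν (z, b) - m (z, b))| * q z a) := by
          gcongr with a
          have hdiff : (∑ b, m (z, b)) * q z a - m (z, a) =
              ν (z, a) - m (z, a) - (∑ b, (ν (z, b) - m (z, b))) * q z a := by
            rw [sum_sub_distrib, sub_mul, hν]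
            ring
          simpa only [hdiff, abs_mul, abs_of_nonneg ((hq z).1 a)] using
            abs_sub (ν (z, a) - m (z, a)) ((∑ b, (ν (z, b) - m (z, b))) * q z a)
      _ = ∑ a, |ν (z, a) - m (z, a)| + |∑ b, (ν (z, b) - m (z, b))| := by
          rw [sum_add_distrib, ← mul_sum, (hq z).2, mul_one]
      _ ≤ 2 * ∑ a, |ν (z, a) - m (z, a)| := by
          rw [two_mul]
          gcongr
          exact abs_sum_le_sum_abs _ _
  rw [condErr, Fintype.sum_prod_type, mul_sum]
  exact sum_le_sum fun z _ => hcell z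

variable {ι : Type*} [Fintype ι] [DecidableEq Z] [DecidableEq A]

/-- Tabular behavioral cloning from the sample `D`: the empirical conditional frequency of the
action `a` at `z`, or `π₀ z a` when the sample does not visit `z`. -/
def tabularBC (π₀ : Z → A → ℝ) (D : ι → Z × A) (z : Z) (a : A) : ℝ :=
  if 0 < #{j | (D j).1 = z} then
    (#{j | (D j).1 = z ∧ (D j).2 = a} : ℝ) / (#{j | (D j).1 = z} : ℝ)
  else π₀ z a

lemma sum_card_filter_fst_eq_and_snd_eq (D : ι → Z × A) (z : Z) :
    ∑ a, #{j | (D j).1 = z ∧ (D j).2 = a} = #{j | (D j).1 = z} := by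
  rw [card_eq_sum_card_fiberwise (t := univ) (f := fun j => (D j).2) (by simp)]
  simp only [filter_filter]

lemma tabularBC_mem_stdSimplex {π₀ : Z → A → ℝ} (hπ₀ : ∀ z, π₀ z ∈ stdSimplex ℝ A)
    (D : ι → Z × A) (z : Z) : tabularBC π₀ D z ∈ stdSimplex ℝ A := by
  unfold tabularBC
  split_ifs with h
  · refine ⟨fun a => by positivity, ?_⟩
    rw [← sum_div, ← Nat.cast_sum, sum_card_filter_fst_eq_and_snd_eq,
      div_self (Nat.cast_ne_zero.2 h.ne')]
  · exact hπ₀ z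

lemma sum_empiricalDist_mul_tabularBC (π₀ : Z → A → ℝ) (D : ι → Z × A) (z : Z) (a : A) :
    (∑ b, empiricalDist D (z, b)) * tabularBC π₀ D z a = empiricalDist D (z, a) := by
  simp only [empiricalDist, Prod.ext_iff, ← sum_div, ← Nat.cast_sum,
    sum_card_filter_fst_eq_and_snd_eq, tabularBC]
  split_ifs with h
  · field_simp
  · have hz : #{j | (D j).1 = z} = 0 := by omega
    have hza : #{j | (D j).1 = z ∧ (D j).2 = a} = 0 := by
      rw [← sum_card_filter_fst_eq_and_snd_eq, sum_eq_zero_iff] at hz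
      exact hz a (mem_univ a)
    simp [hz, hza]

lemma perfDiff_tabularBC_comp_le [Fintype S] [Fintype Z] [Nonempty A] {P : S → A → S → ℝ}
    {R : S → A → ℝ} {μ q : S → ℝ} {γ Rmax : ℝ} {π : S → A → ℝ} {φ : S → Z}
    {PZ : Z → A → S → ℝ} {RZ π₀ : Z → A → ℝ}
    (hP : ∀ s a, P s a ∈ stdSimplex ℝ S) (hPZ : ∀ z a, PZ z a ∈ stdSimplex ℝ S)
    (hRmax : 0 ≤ Rmax) (hR : ∀ s a, |R s a| ≤ Rmax) (hRZ : ∀ z a, |RZ z a| ≤ Rmax)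
    (hμ : μ ∈ stdSimplex ℝ S) (hγ0 : 0 ≤ γ) (hγ1 : γ < 1) (hπ : ∀ s, π s ∈ stdSimplex ℝ A)
    (hπ₀ : ∀ z, π₀ z ∈ stdSimplex ℝ A) (hq : q ∈ stdSimplex ℝ S)
    (hdq : ∀ s, q s = 0 → visitation P π μ γ s = 0)
    (hPPZ : ∀ s a s', q s ≠ 0 → PZ (φ s) a s' = 0 → P s a s' = 0) (D : ι → Z × A) :
    perfDiff P R μ γ (fun s => tabularBC π₀ D (φ s)) π ≤
      (1 + √(dChi2 (visitation P π μ γ) q)) * modelErr q φ P R PZ RZ Rmax γ +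
        2 * Rmax / (1 - γ) ^ 2 * ∑ k, |empiricalDist D k -
          margDist (Prod.map φ id) (demoLaw (visitation P π μ γ) π) k| := by
  have hbc := tabularBC_mem_stdSimplex hπ₀ D
  refine (perfDiff_comp_le hP hPZ hRmax hR hRZ hμ hγ0 hγ1 hπ hbc hq hdq hPPZ).trans
    (add_le_add le_rfl ?_)
  rw [mul_comm 2, mul_div_right_comm, mul_assoc]
  gcongr
  exact condErr_le_two_mul_sum_abs_sub hbc (sum_empiricalDist_mul_tabularBC π₀ D)

end BehavioralCloning

theorem sample_efficiency_of_representation_bc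
    [Fintype S] [Fintype A] [Fintype Z] [Nonempty S] [Nonempty A] [Nonempty Z]
    [DecidableEq Z] [DecidableEq A]
    (P : S → A → S → ℝ) (hP0 : ∀ s a s', 0 ≤ P s a s')
    (hP1 : ∀ s a, ∑ s' : S, P s a s' = 1)
    (R : S → A → ℝ) (Rmax : ℝ) (hRmax : 0 ≤ Rmax) (hR : ∀ s a, |R s a| ≤ Rmax)
    (μ : S → ℝ) (hμ0 : ∀ s, 0 ≤ μ s) (hμ1 : ∑ s : S, μ s = 1)
    (γ : ℝ) (hγ0 : 0 ≤ γ) (hγ1 : γ < 1)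
    (πstar : S → A → ℝ)
    (hπs0 : ∀ s a, 0 ≤ πstar s a) (hπs1 : ∀ s, ∑ a : A, πstar s a = 1)
    (doff : S → ℝ) (hdoff0 : ∀ s, 0 ≤ doff s) (hdoff1 : ∑ s : S, doff s = 1)
    (hsupp : ∀ s, 0 < visitation P πstar μ γ s → 0 < doff s)
    (φ : S → Z)
    (RZ : Z → A → ℝ) (hRZ : ∀ z a, |RZ z a| ≤ Rmax)
    (PZ : Z → A → S → ℝ) (hPZ0 : ∀ z a s', 0 ≤ PZ z a s')
    (hPZ1 : ∀ z a, ∑ s' : S, PZ z a s' = 1)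
    (hPZpos : ∀ s a s', 0 < P s a s' → 0 < doff s → 0 < PZ (φ s) a s')
    (N : ℕ) (hN : 0 < N)
    (π₀ : Z → A → ℝ) (hπ₀0 : ∀ z a, 0 ≤ π₀ z a) (hπ₀1 : ∀ z, ∑ a : A, π₀ z a = 1) :
    ∑ ω : Fin N → S × A,
        (∏ j : Fin N, visitation P πstar μ γ (ω j).1 * πstar (ω j).1 (ω j).2) *
          perfDiff P R μ γ
            (fun s a =>
              if 0 < (univ.filter fun j : Fin N => φ (ω j).1 = φ s).card then
                ((univ.filter fun j : Fin N => φ (ω j).1 = φ s ∧ (ω j).2 = a).card : ℝ) /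
                  ((univ.filter fun j : Fin N => φ (ω j).1 = φ s).card : ℝ)
              else π₀ (φ s) a)
            πstar ≤
      (1 + Real.sqrt (dChi2 (visitation P πstar μ γ) doff)) *
          ((Fintype.card A : ℝ) / (1 - γ) *
              Real.sqrt (∑ s : S, doff s *
                ((1 / (Fintype.card A : ℝ)) * ∑ a : A, (R s a - RZ (φ s) a) ^ 2))
            + 2 * γ * (Fintype.card A : ℝ) * Rmax / (1 - γ) ^ 2 *
              Real.sqrt ((1 / 2) * ∑ s : S, doff s *
                ((1 / (Fintype.card A : ℝ)) * ∑ a : A, dKL (P s a) (PZ (φ s) a))))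
        + (2 * Rmax / (1 - γ) ^ 2) *
            Real.sqrt ((Fintype.card Z * Fintype.card A : ℝ) / N) := by
  have hP s a : P s a ∈ stdSimplex ℝ S := ⟨hP0 s a, hP1 s a⟩
  have hPZ z a : PZ z a ∈ stdSimplex ℝ S := ⟨hPZ0 z a, hPZ1 z a⟩
  have hπ s : πstar s ∈ stdSimplex ℝ A := ⟨hπs0 s, hπs1 s⟩
  have hπ₀ z : π₀ z ∈ stdSimplex ℝ A := ⟨hπ₀0 z, hπ₀1 z⟩
  have hd : visitation P πstar μ γ ∈ stdSimplex ℝ S :=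
    visitation_mem_stdSimplex hP hπ ⟨hμ0, hμ1⟩ hγ0 hγ1
  have hdsupp s (h : doff s = 0) : visitation P πstar μ γ s = 0 :=
    by_contra fun hs => (hsupp s ((hd.1 s).lt_of_ne' hs)).ne' h
  have hPsupp s a s' (h : doff s ≠ 0) (h' : PZ (φ s) a s' = 0) : P s a s' = 0 :=
    by_contra fun hs => (hPZpos s a s' ((hP0 s a s').lt_of_ne' hs) ((hdoff0 s).lt_of_ne' h)).ne' h'
  have hpointwise (ω : Fin N → S × A) :=
    perfDiff_tabularBC_comp_le hP hPZ hRmax hR hRZ ⟨hμ0, hμ1⟩ hγ0 hγ1 hπ hπ₀ ⟨hdoff0, hdoff1⟩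
      hdsupp hPsupp fun j => Prod.map φ id (ω j)
  have : Nonempty (Fin N) := ⟨⟨0, hN⟩⟩
  have hdemo := demoLaw_mem_stdSimplex hd hπ
  refine (sum_mul_le_add_mul_sum_mul (iidLaw_mem_stdSimplex hdemo) hpointwise).trans
    (add_le_add le_rfl (mul_le_mul_of_nonneg_left ?_ (by positivity)))
  simpa using sum_iidLaw_mul_sum_abs_empiricalDist_sub_le (ι := Fin N) hdemo (Prod.map φ id)
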